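/- arXiv:1912.03745 — 2 statements merged into one kernel-verified Lean document; each statement's English description precedes it below -/
import Mathlib

section
/- Let n ≥ 1, 0 < α < n, and let N be a natural number with 2N > n. Then there exists a constant D > 0 such that for every x ∈ ℝⁿ with ‖x‖ ≥ 1, ∫_{ℝⁿ} ‖y‖^{α−n}·(1 + ‖x − y‖²)^{−N} dy ≤ D·‖x‖^{α−n}. -/
open MeasureTheory

/-!
Let `d` be the dimension, and write the integrand as `‖y‖ ^ p` times the weight
`(1 + ‖x - y‖ ^ 2) ^ (-r / 2)`, where `-d < p ≤ 0` and `d < r`. Put `R = (1 + ‖x‖) / 2`.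

If `‖y‖ < R` then `R ≤ 1 + ‖x - y‖`, so the weight is `O(R ^ (-r))`, while by homogeneity `‖y‖ ^ p`
has integral `O(R ^ (d + p))` over the ball of radius `R`; the product of the two is `O(R ^ p)`, as
`d < r` and `R ≥ 1 / 2`. If `‖y‖ ≥ R` then `‖y‖ ^ p ≤ R ^ p`, and the integral of the weight is
finite and independent of `x`.
-/

section

open Metric Module

variable {E : Type*} [NormedAddCommGroup E]

theorem one_add_norm_sub_sq_rpow_le {x y : E} {r R : ℝ} (hr : 0 < r) (hR : 0 < R)
    (hRx : R ≤ (1 + ‖x‖) / 2) (hy : ‖y‖ < R) :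
    (1 + ‖x - y‖ ^ 2) ^ (-r / 2) ≤ 2 ^ (r / 2) * R ^ (-r) := by
  have hRxy : R ≤ 1 + ‖x - y‖ := by linarith [norm_sub_norm_le x y]
  calc (1 + ‖x - y‖ ^ 2) ^ (-r / 2) ≤ 2 ^ (r / 2) * (1 + ‖x - y‖) ^ (-r) :=
        rpow_neg_one_add_norm_sq_le _ hr
    _ ≤ 2 ^ (r / 2) * R ^ (-r) := by
        gcongr 2 ^ (r / 2) * ?_
        exact Real.rpow_le_rpow_of_nonpos hR hRxy (by linarith)

theorem norm_rpow_mul_one_add_norm_sub_sq_rpow_le {x : E} {p r R : ℝ} (hp : p ≤ 0) (hr : 0 < r)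
    (hR : 0 < R) (hRx : R ≤ (1 + ‖x‖) / 2) (y : E) :
    ‖y‖ ^ p * (1 + ‖x - y‖ ^ 2) ^ (-r / 2) ≤
      (ball 0 R).indicator (fun z ↦ ‖z‖ ^ p) y * (2 ^ (r / 2) * R ^ (-r)) +
        R ^ p * (1 + ‖x - y‖ ^ 2) ^ (-r / 2) := by
  by_cases hy : y ∈ ball 0 R
  · rw [Set.indicator_of_mem hy]
    refine le_add_of_le_of_nonneg ?_ (by positivity)
    gcongr
    exact one_add_norm_sub_sq_rpow_le hr hR hRx (mem_ball_zero_iff.1 hy)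
  · rw [Set.indicator_of_notMem hy, zero_mul, zero_add]
    have hRy : R ≤ ‖y‖ := by simpa only [mem_ball_zero_iff, not_lt] using hy
    gcongr ?_ * _
    exact Real.rpow_le_rpow_of_nonpos hR hRy hp

variable [NormedSpace ℝ E] [FiniteDimensional ℝ E] [MeasurableSpace E] [BorelSpace E]
  (μ : Measure E) [μ.IsAddHaarMeasure] {p r : ℝ}

theorem integrableOn_ball_norm_rpow [Nontrivial E] (hp : -finrank ℝ E < p) (R : ℝ) :
    IntegrableOn (fun y : E ↦ ‖y‖ ^ p) (ball 0 R) μ := by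
  rw [integrableOn_fun_norm_addHaar μ (f := fun t : ℝ ↦ t ^ p)]
  have hpow : IntegrableOn (fun t : ℝ ↦ t ^ (finrank ℝ E - 1 + p)) (Set.Ioo 0 R) :=
    (intervalIntegral.intervalIntegrable_rpow' (by linarith)).1.mono_set Set.Ioo_subset_Ioc_self
  refine hpow.congr_fun (fun t ht ↦ ?_) measurableSet_Ioo
  simp only [smul_eq_mul]
  rw [Real.rpow_add ht.1, ← Nat.cast_pred finrank_pos, Real.rpow_natCast]

theorem setIntegral_ball_norm_rpow {R : ℝ} (hR : 0 < R) :
    ∫ y in ball (0 : E) R, ‖y‖ ^ p ∂μ =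
      R ^ (finrank ℝ E + p) * ∫ y in ball (0 : E) 1, ‖y‖ ^ p ∂μ := by
  have hscale : R ^ p * ∫ y in ball (0 : E) 1, ‖y‖ ^ p ∂μ =
      (R ^ finrank ℝ E)⁻¹ * ∫ y in ball (0 : E) R, ‖y‖ ^ p ∂μ := by
    simpa only [smul_unitBall_of_pos hR, norm_smul, Real.norm_of_nonneg hR.le,
      Real.mul_rpow hR.le (norm_nonneg _), integral_const_mul, smul_eq_mul] using
      Measure.setIntegral_comp_smul_of_pos μ (fun y : E ↦ ‖y‖ ^ p) (ball 0 1) hR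
  rw [Real.rpow_add hR, Real.rpow_natCast, mul_assoc, hscale, mul_inv_cancel_left₀ (by positivity)]

theorem integrable_and_integral_norm_rpow_mul_le (hp : -finrank ℝ E < p) (hp0 : p ≤ 0)
    (hr : finrank ℝ E < r) {x : E} {R : ℝ} (hR : 0 < R) (hRx : R ≤ (1 + ‖x‖) / 2) :
    Integrable (fun y ↦ ‖y‖ ^ p * (1 + ‖x - y‖ ^ 2) ^ (-r / 2)) μ ∧
      ∫ y, ‖y‖ ^ p * (1 + ‖x - y‖ ^ 2) ^ (-r / 2) ∂μ ≤
        R ^ (finrank ℝ E + p) * (∫ y in ball (0 : E) 1, ‖y‖ ^ p ∂μ) * (2 ^ (r / 2) * R ^ (-r)) +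
          R ^ p * ∫ y : E, (1 + ‖y‖ ^ 2) ^ (-r / 2) ∂μ := by
  have hd : (0 : ℝ) < finrank ℝ E := by linarith
  have : Nontrivial E := nontrivial_of_finrank_pos (R := ℝ) (mod_cast hd)
  have hbound := norm_rpow_mul_one_add_norm_sub_sq_rpow_le hp0 (hd.trans hr) hR hRx
  have hnear : Integrable (fun y ↦
      (ball 0 R).indicator (fun z : E ↦ ‖z‖ ^ p) y * (2 ^ (r / 2) * R ^ (-r))) μ :=
    ((integrableOn_ball_norm_rpow μ hp R).integrable_indicator measurableSet_ball).mul_const _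
  have hfar : Integrable (fun y ↦ R ^ p * (1 + ‖x - y‖ ^ 2) ^ (-r / 2)) μ :=
    ((integrable_rpow_neg_one_add_norm_sq hr).comp_sub_left x).const_mul _
  have hint : Integrable (fun y ↦ ‖y‖ ^ p * (1 + ‖x - y‖ ^ 2) ^ (-r / 2)) μ :=
    (hnear.add hfar).mono' (by fun_prop) <| .of_forall fun y ↦ by
      rw [Real.norm_of_nonneg (by positivity)]
      exact hbound y
  refine ⟨hint, (integral_mono hint (hnear.add hfar) hbound).trans_eq ?_⟩
  simp only [Pi.add_apply]
  rw [integral_add hnear hfar, integral_mul_const, integral_const_mul,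
    integral_indicator measurableSet_ball, setIntegral_ball_norm_rpow μ hR,
    integral_sub_left_eq_self (fun y : E ↦ (1 + ‖y‖ ^ 2) ^ (-r / 2)) μ x]

theorem riesz_kernel_decay_estimate_general (hp : -finrank ℝ E < p) (hp0 : p ≤ 0)
    (hr : finrank ℝ E < r) :
    ∃ D > 0, ∀ x : E, Integrable (fun y ↦ ‖y‖ ^ p * (1 + ‖x - y‖ ^ 2) ^ (-r / 2)) μ ∧
      ∫ y, ‖y‖ ^ p * (1 + ‖x - y‖ ^ 2) ^ (-r / 2) ∂μ ≤ D * (1 + ‖x‖) ^ p := by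
  set C := ∫ y in ball (0 : E) 1, ‖y‖ ^ p ∂μ
  set J := ∫ y : E, (1 + ‖y‖ ^ 2) ^ (-r / 2) ∂μ
  set K := (1 / 2) ^ (finrank ℝ E - r) * C * 2 ^ (r / 2) + J
  refine ⟨(K + 1) * (1 / 2) ^ p, by positivity, fun x ↦ ?_⟩
  set R := (1 + ‖x‖) / 2 with hRx
  have hR : 0 < R := by positivity
  have hR_half : 1 / 2 ≤ R := by linarith [norm_nonneg x]
  obtain ⟨hint, hle⟩ := integrable_and_integral_norm_rpow_mul_le μ hp hp0 hr hR hRx.le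
  refine ⟨hint, hle.trans ?_⟩
  have hpow : R ^ (finrank ℝ E + p) * R ^ (-r) = R ^ (finrank ℝ E - r) * R ^ p := by
    rw [← Real.rpow_add hR, ← Real.rpow_add hR]
    ring_nf
  have hpow_le : R ^ (finrank ℝ E - r) ≤ (1 / 2) ^ (finrank ℝ E - r) :=
    Real.rpow_le_rpow_of_nonpos (by norm_num) hR_half (by linarith)
  have hcoeff : R ^ (finrank ℝ E - r) * C * 2 ^ (r / 2) + J ≤ K := by
    unfold K
    gcongr
  calc R ^ (finrank ℝ E + p) * C * (2 ^ (r / 2) * R ^ (-r)) + R ^ p * J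
      = (R ^ (finrank ℝ E - r) * C * 2 ^ (r / 2) + J) * R ^ p := by
        linear_combination C * 2 ^ (r / 2) * hpow
    _ ≤ (K + 1) * R ^ p :=
        mul_le_mul_of_nonneg_right (hcoeff.trans (lt_add_one K).le) (by positivity)
    _ = (K + 1) * (1 / 2) ^ p * (1 + ‖x‖) ^ p := by
        rw [hRx, div_eq_mul_one_div, mul_comm (1 + ‖x‖),
          Real.mul_rpow (by norm_num) (by positivity), mul_assoc]

end

/-- For `0 < α < n` and `2N > n`, there is `D > 0` such that for all `‖x‖ ≥ 1`,
`∫ ‖y‖^{α-n}(1 + ‖x-y‖²)^{-N} dy ≤ D ‖x‖^{α-n}`. -/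
theorem riesz_kernel_decay_estimate (n : ℕ) (hn : 1 ≤ n) (α : ℝ)
    (hα0 : 0 < α) (hαn : α < n) (N : ℕ) (hN : n < 2 * N) :
    ∃ D > 0, ∀ x : EuclideanSpace ℝ (Fin n), 1 ≤ ‖x‖ →
      (∫ y : EuclideanSpace ℝ (Fin n),
          ‖y‖ ^ (α - n) * (1 + ‖x - y‖ ^ 2) ^ (-(N : ℝ))) ≤ D * ‖x‖ ^ (α - n) := by
  obtain ⟨D, hD, hdecay⟩ := riesz_kernel_decay_estimate_general
    (volume : Measure (EuclideanSpace ℝ (Fin n))) (p := α - n) (r := 2 * N)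
    (by simpa using hα0) (by linarith) (by simpa using mod_cast hN)
  refine ⟨D, hD, fun x hx ↦ ?_⟩
  have hexp : -(2 * N : ℝ) / 2 = -N := by ring
  have hle := (hdecay x).2
  rw [hexp] at hle
  refine hle.trans ?_
  gcongr D * ?_
  exact Real.rpow_le_rpow_of_nonpos (by linarith) (by linarith) (by linarith)
end

section
/- Let n ≥ 1, let s, t ≥ 0, and let 0 < α < n. Suppose there exists K > 0 such that for all Schwartz functions g₀, h₀ : ℝⁿ → ℂ, |∫_{ℝⁿ} ∫_{ℝⁿ} ‖y − x‖^{α−n} (1 + ‖x‖²)^{−s/2} (1 + ‖y‖²)^{−t/2} g₀(x) conj(h₀(y)) dx dy| ≤ K ‖g₀‖_{L²} ‖h₀‖_{L²}. Then there exists a constant K₁ > 0 such that for every natural number m ≥ 1, ∫_{B_m × B_m} (1 + ‖x‖² + ‖y‖²)^{−(n − α + s + t)/2} d(x,y) ≤ K₁·mⁿ, where B_m := {x ∈ ℝⁿ : ‖x‖ ≤ m} and the integral is over B_m × B_m ⊆ ℝⁿ × ℝⁿ with Lebesgue measure. -/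
/-!
Boundedness forces `α ≤ s + t`, and this inequality implies the growth bound.

For the first part, test the form on two bumps of radius `R ≥ 1` centred at `±2R e` with `‖e‖ = 1`.
Their supports are at distance `2R`, so the singularity of the kernel is never met, and on the
product of the supports the kernel is at least a constant times `R ^ (α - n - s - t)`. The form is
thus at least `c R ^ (α - n - s - t) R ^ (2n)`, while the product of the `L²` norms is at most
`C R ^ n`. Hence `R ^ (α - s - t)` is bounded as `R → ∞`.

For the second part, `α ≤ s + t` gives
`(1 + ‖x‖² + ‖y‖²) ^ (-(n - α + s + t) / 2) ≤ max(‖x‖, ‖y‖) ^ (-n)`. The right-hand side is locally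
integrable on the `2n`-dimensional space `ℝⁿ × ℝⁿ` and homogeneous of degree `-n`, so by scaling its
integral over `B_r × B_r` is a constant times `r ^ n`.
-/

open MeasureTheory

/-- The `L²(ℝⁿ)` norm of `g`. -/
noncomputable def l2Norm (n : ℕ) (g : EuclideanSpace ℝ (Fin n) → ℂ) : ℝ :=
  (∫ x : EuclideanSpace ℝ (Fin n), ‖g x‖ ^ 2) ^ ((1 : ℝ) / 2)

open Metric Module

lemma nonpos_of_forall_rpow_le {a M : ℝ} (h : ∀ R : ℝ, 1 ≤ R → R ^ a ≤ M) : a ≤ 0 := by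
  by_contra! ha
  obtain ⟨R, hR, hMR⟩ := ((Filter.eventually_ge_atTop 1).and
    ((tendsto_rpow_atTop ha).eventually_gt_atTop M)).exists
  exact (h R hR).not_gt hMR

lemma rpow_neg_abs_mul_rpow_le {C R a : ℝ} (γ : ℝ) (hR : 0 < R) (hRa : R ≤ a) (haC : a ≤ C * R) :
    C ^ (-|γ|) * R ^ γ ≤ a ^ γ := by
  have ha : 0 < a := hR.trans_le hRa
  have hquot : 1 ≤ a / R := (one_le_div hR).2 hRa
  calc C ^ (-|γ|) * R ^ γ
      ≤ (a / R) ^ (-|γ|) * R ^ γ := by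
        gcongr ?_ * _
        exact Real.rpow_le_rpow_of_nonpos (by positivity) ((div_le_iff₀ hR).2 haC)
          (neg_nonpos.2 (abs_nonneg γ))
    _ ≤ (a / R) ^ γ * R ^ γ := by
        gcongr ?_ * _
        exact Real.rpow_le_rpow_of_exponent_le hquot (neg_abs_le γ)
    _ = a ^ γ := by rw [← Real.mul_rpow (by positivity) hR.le, div_mul_cancel₀ a hR.ne']

section Kernel

variable {E : Type*} [NormedAddCommGroup E]

/-- The weighted Riesz kernel `‖y - x‖ ^ γ (1 + ‖x‖²) ^ (-s / 2) (1 + ‖y‖²) ^ (-t / 2)`; the Riesz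
potential of order `α` on a `d`-dimensional space corresponds to `γ = α - d`. The arguments are
ordered as in `∫ y, ∫ x`. -/
noncomputable def weightedRieszKernel (γ s t : ℝ) (y x : E) : ℝ :=
  ‖y - x‖ ^ γ * (1 + ‖x‖ ^ 2) ^ (-s / 2) * (1 + ‖y‖ ^ 2) ^ (-t / 2)

lemma continuousOn_weightedRieszKernel (γ s t : ℝ) :
    ContinuousOn (fun p : E × E => weightedRieszKernel γ s t p.1 p.2) {p | p.1 ≠ p.2} := by
  have hweight (u : ℝ) : Continuous fun x : E => (1 + ‖x‖ ^ 2) ^ u :=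
    Continuous.rpow_const (by fun_prop) fun x => Or.inl (by positivity)
  have hdist : ContinuousOn (fun p : E × E => ‖p.1 - p.2‖ ^ γ) {p | p.1 ≠ p.2} :=
    ContinuousOn.rpow_const (by fun_prop) fun p hp => Or.inl (norm_ne_zero_iff.2 (sub_ne_zero.2 hp))
  exact (hdist.mul ((hweight _).comp continuous_snd).continuousOn).mul
    ((hweight _).comp continuous_fst).continuousOn

lemma rpow_neg_abs_mul_rpow_neg_le_weight (u : ℝ) {R : ℝ} (hR : 1 ≤ R) {x : E} (hRx : R ≤ ‖x‖)
    (hxR : ‖x‖ ≤ 3 * R) :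
    (10 : ℝ) ^ (-|-u / 2|) * R ^ (-u) ≤ (1 + ‖x‖ ^ 2) ^ (-u / 2) := by
  have hpow : (R ^ 2) ^ (-u / 2) = R ^ (-u) := by
    rw [← Real.rpow_natCast_mul (by positivity)]
    congr 1
    push_cast
    ring
  rw [← hpow]
  exact rpow_neg_abs_mul_rpow_le _ (by positivity) (by nlinarith) (by nlinarith)

lemma exists_mul_rpow_le_weightedRieszKernel (γ s t : ℝ) :
    ∃ c > 0, ∀ R : ℝ, 1 ≤ R → ∀ x y : E, ‖x‖ ∈ Set.Icc R (3 * R) → ‖y‖ ∈ Set.Icc R (3 * R) →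
      R ≤ ‖y - x‖ → c * R ^ (γ - s - t) ≤ weightedRieszKernel γ s t y x := by
  refine ⟨6 ^ (-|γ|) * 10 ^ (-|-s / 2|) * 10 ^ (-|-t / 2|), by positivity, ?_⟩
  rintro R hR x y ⟨hRx, hxR⟩ ⟨hRy, hyR⟩ hRyx
  have hR0 : 0 < R := by positivity
  have hyxR : ‖y - x‖ ≤ 6 * R := (norm_sub_le y x).trans (by linarith)
  calc 6 ^ (-|γ|) * 10 ^ (-|-s / 2|) * 10 ^ (-|-t / 2|) * R ^ (γ - s - t)
      = (6 ^ (-|γ|) * R ^ γ) * (10 ^ (-|-s / 2|) * R ^ (-s)) * (10 ^ (-|-t / 2|) * R ^ (-t)) := by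
        rw [sub_eq_add_neg, sub_eq_add_neg, Real.rpow_add hR0, Real.rpow_add hR0]
        ring
    _ ≤ weightedRieszKernel γ s t y x := by
        unfold weightedRieszKernel
        gcongr ?_ * ?_ * ?_
        · exact rpow_neg_abs_mul_rpow_le γ hR0 hRyx hyxR
        · exact rpow_neg_abs_mul_rpow_neg_le_weight s hR hRx hxR
        · exact rpow_neg_abs_mul_rpow_neg_le_weight t hR hRy hyR

lemma norm_mem_Icc_of_mem_closedBall {R : ℝ} {a x : E} (ha : ‖a‖ = 2 * R)
    (hx : x ∈ closedBall a R) : ‖x‖ ∈ Set.Icc R (3 * R) := by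
  have hxa := abs_le.1 ((abs_norm_sub_norm_le x a).trans (mem_closedBall_iff_norm.1 hx))
  constructor <;> linarith

lemma two_mul_norm_sub_le_norm_sub_of_mem_closedBall [NormedSpace ℝ E] {R : ℝ} {a x y : E}
    (hx : x ∈ closedBall a R) (hy : y ∈ closedBall (-a) R) : 2 * (‖a‖ - R) ≤ ‖y - x‖ := by
  have htri : ‖(2 : ℝ) • a‖ ≤ ‖y - -a‖ + ‖x - a‖ + ‖y - x‖ := calc
    _ = ‖(y - -a) - (x - a) - (y - x)‖ := by congr 1; module
    _ ≤ ‖y - -a‖ + ‖x - a‖ + ‖y - x‖ := norm_sub_le_of_le (norm_sub_le _ _) le_rfl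
  rw [norm_smul, Real.norm_two] at htri
  linarith [mem_closedBall_iff_norm.1 hx, mem_closedBall_iff_norm.1 hy]

end Kernel

lemma mul_integral_mul_integral_le_integral_integral {X Y : Type*}
    [TopologicalSpace X] [MeasurableSpace X] [OpensMeasurableSpace X]
    [TopologicalSpace Y] [MeasurableSpace Y] [OpensMeasurableSpace Y]
    [SecondCountableTopologyEither Y X]
    {μ : Measure X} [SFinite μ] [IsFiniteMeasureOnCompacts μ]
    {ν : Measure Y} [SFinite ν] [IsFiniteMeasureOnCompacts ν]
    {k : Y → X → ℝ} {φ : X → ℝ} {ψ : Y → ℝ} {κ : ℝ}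
    (hφ : Continuous φ) (hφc : HasCompactSupport φ) (hφ0 : 0 ≤ φ)
    (hψ : Continuous ψ) (hψc : HasCompactSupport ψ) (hψ0 : 0 ≤ ψ)
    (hk : ContinuousOn (fun p : Y × X => k p.1 p.2) (tsupport ψ ×ˢ tsupport φ))
    (hκ : ∀ y ∈ tsupport ψ, ∀ x ∈ tsupport φ, κ ≤ k y x) :
    κ * ((∫ x, φ x ∂μ) * ∫ y, ψ y ∂ν) ≤ ∫ y, ∫ x, k y x * (φ x * ψ y) ∂μ ∂ν := by
  have hφψ : Continuous fun p : Y × X => φ p.2 * ψ p.1 := by fun_prop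
  have hsupport : Function.support (fun p : Y × X => k p.1 p.2 * (φ p.2 * ψ p.1)) ⊆
      tsupport ψ ×ˢ tsupport φ := fun p hp =>
    ⟨subset_tsupport ψ fun h => hp (by simp [h]), subset_tsupport φ fun h => hp (by simp [h])⟩
  have hkint : Integrable (fun p : Y × X => k p.1 p.2 * (φ p.2 * ψ p.1)) (ν.prod μ) :=
    (integrableOn_iff_integrable_of_support_subset hsupport).1
      ((hk.mul hφψ.continuousOn).integrableOn_compact' (hψc.prod hφc)
        ((isClosed_tsupport ψ).prod (isClosed_tsupport φ)).measurableSet)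
  have hκint : Integrable (fun p : Y × X => ψ p.1 * φ p.2) (ν.prod μ) :=
    (hψ.integrable_of_hasCompactSupport hψc).mul_prod (hφ.integrable_of_hasCompactSupport hφc)
  calc κ * ((∫ x, φ x ∂μ) * ∫ y, ψ y ∂ν)
      = ∫ p, κ * (ψ p.1 * φ p.2) ∂ν.prod μ := by
        rw [integral_const_mul, integral_prod_mul, mul_comm (∫ x, φ x ∂μ)]
    _ ≤ ∫ p, k p.1 p.2 * (φ p.2 * ψ p.1) ∂ν.prod μ := by
        refine integral_mono (hκint.const_mul κ) hkint fun p => ?_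
        by_cases hp : p ∈ tsupport ψ ×ˢ tsupport φ
        · rw [mul_comm (ψ p.1)]
          exact mul_le_mul_of_nonneg_right (hκ p.1 hp.1 p.2 hp.2)
            (mul_nonneg (hφ0 p.2) (hψ0 p.1))
        · have hzero : φ p.2 * ψ p.1 = 0 := by
            rcases not_and_or.1 hp with h | h <;> simp [image_eq_zero_of_notMem_tsupport h]
          simp [hzero, mul_comm (ψ p.1)]
    _ = ∫ y, ∫ x, k y x * (φ x * ψ y) ∂μ ∂ν := integral_prod _ hkint

lemma integral_bump_sq_le {E : Type*} [NormedAddCommGroup E] [NormedSpace ℝ E]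
    [HasContDiffBump E] [FiniteDimensional ℝ E] [MeasurableSpace E] [BorelSpace E] {μ : Measure E}
    [IsLocallyFiniteMeasure μ] {c : E} (φ : ContDiffBump c) :
    ∫ x, φ x ^ 2 ∂μ ≤ μ.real (closedBall c φ.rOut) := by
  have hφ_sq : ∀ x, φ x ^ 2 ≤ φ x := fun x => pow_le_of_le_one φ.nonneg φ.le_one two_ne_zero
  exact (integral_mono_of_nonneg (ae_of_all _ fun x => sq_nonneg (φ x)) φ.integrable
    (ae_of_all _ hφ_sq)).trans (φ.integral_le_measure_closedBall μ)

section Form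

variable {E : Type*} [NormedAddCommGroup E] [NormedSpace ℝ E] [MeasurableSpace E]

/-- The sesquilinear form with kernel `k` is bounded on `L²(μ) × L²(μ)`, when tested on Schwartz
functions. -/
def IsL2BoundedForm (μ : Measure E) (k : E → E → ℝ) : Prop :=
  ∃ K > 0, ∀ g h : SchwartzMap E ℂ,
    ‖∫ y, ∫ x, (k y x : ℂ) * (g x * (starRingEnd ℂ) (h y)) ∂μ ∂μ‖ ≤
      K * √(∫ x, ‖g x‖ ^ 2 ∂μ) * √(∫ x, ‖h x‖ ^ 2 ∂μ)

namespace IsL2BoundedForm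

variable {μ : Measure E} {k : E → E → ℝ}

lemma exists_integral_integral_le (hk : IsL2BoundedForm μ k) :
    ∃ K > 0, ∀ φ ψ : E → ℝ, ContDiff ℝ (⊤ : ℕ∞) φ → HasCompactSupport φ →
      ContDiff ℝ (⊤ : ℕ∞) ψ → HasCompactSupport ψ →
      ∫ y, ∫ x, k y x * (φ x * ψ y) ∂μ ∂μ ≤
        K * √(∫ x, φ x ^ 2 ∂μ) * √(∫ x, ψ x ^ 2 ∂μ) := by
  obtain ⟨K, hK, hbound⟩ := hk
  refine ⟨K, hK, fun φ ψ hφ hφc hψ hψc => ?_⟩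
  have exists_schwartz {f : E → ℝ} (hf : ContDiff ℝ (⊤ : ℕ∞) f) (hfc : HasCompactSupport f) :
      ∃ g : SchwartzMap E ℂ, ∀ x, g x = f x :=
    ⟨(hfc.comp_left (g := ((↑) : ℝ → ℂ)) Complex.ofReal_zero).toSchwartzMap
      (Complex.ofRealCLM.contDiff.comp hf), fun _ => rfl⟩
  obtain ⟨g, hg⟩ := exists_schwartz hφ hφc
  obtain ⟨h, hh⟩ := exists_schwartz hψ hψc
  have hform := hbound g h
  simp only [hg, hh, Complex.conj_ofReal, ← Complex.ofReal_mul, integral_complex_ofReal,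
    Complex.norm_real, Real.norm_eq_abs, sq_abs] at hform
  exact (le_abs_self _).trans hform

variable [BorelSpace E] [FiniteDimensional ℝ E] [μ.IsAddHaarMeasure]

lemma exists_mul_integral_bump_le (hk : IsL2BoundedForm μ k) :
    ∃ K, ∀ (κ : ℝ) {a b : E} (φ : ContDiffBump a) (ψ : ContDiffBump b),
      ContinuousOn (fun p : E × E => k p.1 p.2) (closedBall b ψ.rOut ×ˢ closedBall a φ.rOut) →
      (∀ y ∈ closedBall b ψ.rOut, ∀ x ∈ closedBall a φ.rOut, κ ≤ k y x) →
      κ * ((∫ x, φ x ∂μ) * ∫ y, ψ y ∂μ) ≤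
        K * √(μ.real (closedBall a φ.rOut)) * √(μ.real (closedBall b ψ.rOut)) := by
  obtain ⟨K, hK, hbound⟩ := hk.exists_integral_integral_le
  refine ⟨K, fun κ a b φ ψ hcont hlower => ?_⟩
  rw [← φ.tsupport_eq, ← ψ.tsupport_eq] at hcont hlower
  calc κ * ((∫ x, φ x ∂μ) * ∫ y, ψ y ∂μ)
      ≤ ∫ y, ∫ x, k y x * (φ x * ψ y) ∂μ ∂μ :=
        mul_integral_mul_integral_le_integral_integral φ.continuous φ.hasCompactSupport
          (fun _ => φ.nonneg) ψ.continuous ψ.hasCompactSupport (fun _ => ψ.nonneg) hcont hlower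
    _ ≤ K * √(∫ x, φ x ^ 2 ∂μ) * √(∫ x, ψ x ^ 2 ∂μ) :=
        hbound φ ψ φ.contDiff φ.hasCompactSupport ψ.contDiff ψ.hasCompactSupport
    _ ≤ K * √(μ.real (closedBall a φ.rOut)) * √(μ.real (closedBall b ψ.rOut)) := by
        gcongr <;> exact integral_bump_sq_le _

lemma exists_mul_pow_finrank_le (hk : IsL2BoundedForm μ k) :
    ∃ C, ∀ κ R : ℝ, ∀ a b : E, 0 ≤ κ → 0 < R →
      ContinuousOn (fun p : E × E => k p.1 p.2) (closedBall b R ×ˢ closedBall a R) →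
      (∀ y ∈ closedBall b R, ∀ x ∈ closedBall a R, κ ≤ k y x) → κ * R ^ finrank ℝ E ≤ C := by
  obtain ⟨K, hbound⟩ := hk.exists_mul_integral_bump_le
  set d := finrank ℝ E
  set V := μ.real (ball (0 : E) 1)
  have hV : 0 < V := ENNReal.toReal_pos (measure_ball_pos μ 0 one_pos).ne' measure_ball_lt_top.ne
  refine ⟨2 ^ d * (2 ^ d * K) / V, fun κ R a b hκ hR hcont hlower => ?_⟩
  let φ : ContDiffBump a := ⟨R / 2, R, by positivity, by linarith⟩
  let ψ : ContDiffBump b := ⟨R / 2, R, by positivity, by linarith⟩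
  set v := (R / 2) ^ d * V
  have hv : 0 < v := by positivity
  have hRv : R ^ d * V = 2 ^ d * v := by
    rw [← mul_assoc, ← mul_pow, mul_div_cancel₀ R two_ne_zero]
  have hinner (c : E) : μ.real (closedBall c (R / 2)) = v :=
    Measure.addHaar_real_closedBall μ c (by positivity)
  have houter (c : E) : μ.real (closedBall c R) = 2 ^ d * v := by
    rw [← hRv]
    exact Measure.addHaar_real_closedBall μ c hR.le
  have hφ : v ≤ ∫ x, φ x ∂μ := (hinner a).ge.trans (φ.measure_closedBall_le_integral μ)
  have hψ : v ≤ ∫ y, ψ y ∂μ := (hinner b).ge.trans (ψ.measure_closedBall_le_integral μ)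
  have hform : (κ * v) * v ≤ (2 ^ d * K) * v := calc
    (κ * v) * v = κ * (v * v) := mul_assoc κ v v
    _ ≤ κ * ((∫ x, φ x ∂μ) * ∫ y, ψ y ∂μ) :=
        mul_le_mul_of_nonneg_left (mul_le_mul hφ hψ hv.le (hv.le.trans hφ)) hκ
    _ ≤ K * √(μ.real (closedBall a R)) * √(μ.real (closedBall b R)) :=
        hbound κ φ ψ hcont hlower
    _ = (2 ^ d * K) * v := by
        rw [houter, houter, mul_assoc, Real.mul_self_sqrt (by positivity)]
        ring
  rw [le_div_iff₀ hV]
  calc κ * R ^ d * V = 2 ^ d * (κ * v) := by rw [mul_assoc, hRv, mul_left_comm]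
    _ ≤ 2 ^ d * (2 ^ d * K) := by gcongr ?_ * ?_; exact le_of_mul_le_mul_right hform hv

end IsL2BoundedForm

variable [BorelSpace E] [FiniteDimensional ℝ E] [Nontrivial E]
variable {μ : Measure E} [μ.IsAddHaarMeasure]

lemma add_finrank_le_of_isL2BoundedForm_weightedRieszKernel {γ s t : ℝ}
    (hk : IsL2BoundedForm μ (weightedRieszKernel γ s t)) : γ + finrank ℝ E ≤ s + t := by
  obtain ⟨C, hC⟩ := hk.exists_mul_pow_finrank_le
  obtain ⟨c, hc, hlower⟩ := exists_mul_rpow_le_weightedRieszKernel (E := E) γ s t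
  have hpow : ∀ R : ℝ, 1 ≤ R → R ^ (γ - s - t + finrank ℝ E) ≤ C / c := by
    intro R hR
    have hR0 : 0 < R := by positivity
    obtain ⟨a, ha⟩ := exists_norm_eq E (show 0 ≤ 2 * R by positivity)
    have hdist {x y : E} (hx : x ∈ closedBall a R) (hy : y ∈ closedBall (-a) R) :
        R ≤ ‖y - x‖ := by
      linarith [two_mul_norm_sub_le_norm_sub_of_mem_closedBall hx hy]
    have hcont : ContinuousOn (fun p : E × E => weightedRieszKernel γ s t p.1 p.2)
        (closedBall (-a) R ×ˢ closedBall a R) := by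
      refine (continuousOn_weightedRieszKernel γ s t).mono fun p hp => ?_
      exact sub_ne_zero.1 (norm_pos_iff.1 (hR0.trans_le (hdist hp.2 hp.1)))
    have hbound : c * R ^ (γ - s - t) * R ^ finrank ℝ E ≤ C :=
      hC _ R a (-a) (by positivity) hR0 hcont fun y hy x hx =>
        hlower R hR x y (norm_mem_Icc_of_mem_closedBall ha hx)
          (norm_mem_Icc_of_mem_closedBall (by rwa [norm_neg]) hy) (hdist hx hy)
    rwa [le_div_iff₀' hc, Real.rpow_add_natCast hR0.ne', ← mul_assoc]
  linarith [nonpos_of_forall_rpow_le hpow]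

end Form

section Growth

variable {F : Type*} [NormedAddCommGroup F] [NormedSpace ℝ F] [FiniteDimensional ℝ F]
  [MeasurableSpace F] [BorelSpace F] (ν : Measure F) [ν.IsAddHaarMeasure]

lemma locallyIntegrable_norm_rpow [Nontrivial F] {b : ℝ} (hb : -(finrank ℝ F : ℝ) < b) :
    LocallyIntegrable (fun x : F => ‖x‖ ^ b) ν := by
  refine locallyIntegrable_of_norm_le_rpow (C := 1) (α := -b) finrank_pos (by linarith)
    (ae_of_all _ fun x => ?_) (Measurable.aestronglyMeasurable (by fun_prop))
  rw [Real.norm_of_nonneg (by positivity), one_mul, neg_neg]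

lemma setIntegral_closedBall_norm_rpow (b : ℝ) {r : ℝ} (hr : 0 < r) :
    ∫ x in closedBall (0 : F) r, ‖x‖ ^ b ∂ν =
      r ^ (finrank ℝ F + b) * ∫ x in closedBall (0 : F) 1, ‖x‖ ^ b ∂ν := by
  have hscale := Measure.setIntegral_comp_smul_of_pos ν (fun x : F => ‖x‖ ^ b) (closedBall 0 1) hr
  simp only [smul_unitClosedBall_of_nonneg hr.le, norm_smul, Real.norm_of_nonneg hr.le,
    Real.mul_rpow hr.le (norm_nonneg _), integral_const_mul, smul_eq_mul] at hscale
  rw [Real.rpow_add hr, Real.rpow_natCast, mul_assoc, hscale, mul_inv_cancel_left₀ (by positivity)]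

end Growth

section ProductGrowth

variable {E : Type*} [NormedAddCommGroup E]

lemma one_add_norm_sq_add_norm_sq_rpow_le {b β : ℝ} (hb : 0 ≤ b) (hbβ : b ≤ β) {p : E × E}
    (hp : p ≠ 0) :
    (1 + ‖p.1‖ ^ 2 + ‖p.2‖ ^ 2) ^ (-β / 2) ≤ ‖p‖ ^ (-b) := by
  have hnorm : ‖p‖ ^ 2 ≤ 1 + ‖p.1‖ ^ 2 + ‖p.2‖ ^ 2 := by
    rcases max_choice ‖p.1‖ ‖p.2‖ with h | h <;> rw [Prod.norm_def, h] <;>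
      nlinarith [sq_nonneg ‖p.1‖, sq_nonneg ‖p.2‖]
  calc (1 + ‖p.1‖ ^ 2 + ‖p.2‖ ^ 2) ^ (-β / 2)
      ≤ (1 + ‖p.1‖ ^ 2 + ‖p.2‖ ^ 2) ^ (-b / 2) :=
        Real.rpow_le_rpow_of_exponent_le (by nlinarith [sq_nonneg ‖p.1‖, sq_nonneg ‖p.2‖])
          (by linarith)
    _ ≤ (‖p‖ ^ 2) ^ (-b / 2) :=
        Real.rpow_le_rpow_of_nonpos (pow_pos (norm_pos_iff.2 hp) 2) hnorm (by linarith)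
    _ = ‖p‖ ^ (-b) := by
        rw [← Real.rpow_natCast_mul (norm_nonneg p)]
        congr 1
        push_cast
        ring

variable [NormedSpace ℝ E] [FiniteDimensional ℝ E] [Nontrivial E]
  [MeasurableSpace E] [BorelSpace E] (μ : Measure E) [μ.IsAddHaarMeasure]

lemma setIntegral_one_add_norm_sq_add_norm_sq_rpow_le {b β r : ℝ} (hb : 0 ≤ b)
    (hbE : b < 2 * finrank ℝ E) (hbβ : b ≤ β) (hr : 0 < r) :
    ∫ p in closedBall (0 : E) r ×ˢ closedBall (0 : E) r,
        (1 + ‖p.1‖ ^ 2 + ‖p.2‖ ^ 2) ^ (-β / 2) ∂μ.prod μ ≤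
      r ^ (2 * finrank ℝ E - b) * ∫ p in closedBall (0 : E × E) 1, ‖p‖ ^ (-b) ∂μ.prod μ := by
  have hdim : (finrank ℝ (E × E) : ℝ) = 2 * finrank ℝ E := by
    rw [finrank_prod]
    push_cast
    ring
  have hint : IntegrableOn (fun p : E × E => ‖p‖ ^ (-b)) (closedBall 0 r) (μ.prod μ) :=
    (locallyIntegrable_norm_rpow (μ.prod μ) (by linarith)).integrableOn_isCompact
      (isCompact_closedBall 0 r)
  rw [closedBall_prod_same, sub_eq_add_neg, ← hdim, ← setIntegral_closedBall_norm_rpow _ _ hr]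
  refine integral_mono_of_nonneg (ae_of_all _ fun p => by positivity) hint
    (ae_restrict_of_ae ?_)
  filter_upwards [Measure.ae_ne (μ.prod μ) (0 : E × E)] with p hp
  exact one_add_norm_sq_add_norm_sq_rpow_le hb hbβ hp

theorem kernel_bound_implies_growth_general {s t α : ℝ}
    (hker : IsL2BoundedForm μ (weightedRieszKernel (α - finrank ℝ E) s t)) :
    ∃ C > 0, ∀ r : ℝ, 0 < r →
      ∫ p in closedBall (0 : E) r ×ˢ closedBall (0 : E) r,
          (1 + ‖p.1‖ ^ 2 + ‖p.2‖ ^ 2) ^ (-((finrank ℝ E : ℝ) - α + s + t) / 2) ∂μ.prod μ ≤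
        C * r ^ finrank ℝ E := by
  have hα : α ≤ s + t := by
    linarith [add_finrank_le_of_isL2BoundedForm_weightedRieszKernel hker]
  have hd : (0 : ℝ) < finrank ℝ E := by exact_mod_cast finrank_pos
  set I := ∫ p in closedBall (0 : E × E) 1, ‖p‖ ^ (-(finrank ℝ E : ℝ)) ∂μ.prod μ
  have hI : 0 ≤ I := integral_nonneg fun p => by positivity
  refine ⟨I + 1, add_pos_of_nonneg_of_pos hI one_pos, fun r hr => ?_⟩
  calc _ ≤ r ^ (2 * finrank ℝ E - finrank ℝ E : ℝ) * I :=
        setIntegral_one_add_norm_sq_add_norm_sq_rpow_le μ hd.le (by linarith) (by linarith) hr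
    _ = I * r ^ finrank ℝ E := by rw [two_mul, add_sub_cancel_right, Real.rpow_natCast, mul_comm]
    _ ≤ (I + 1) * r ^ finrank ℝ E := by
        gcongr
        linarith

end ProductGrowth

/-- If the bilinear form with kernel `‖y-x‖^{α-n}(1+‖x‖²)^{-s/2}(1+‖y‖²)^{-t/2}` is bounded
on `L² × L²` (tested on Schwartz functions), then the integral of
`(1+‖x‖²+‖y‖²)^{-(n-α+s+t)/2}` over `B_m × B_m` grows at most like `mⁿ`. -/
theorem kernel_bound_implies_growth (n : ℕ) (hn : 1 ≤ n) (s t : ℝ) (hs : 0 ≤ s)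
    (ht : 0 ≤ t) (α : ℝ) (hα0 : 0 < α) (hαn : α < n)
    (hker : ∃ K > 0, ∀ g₀ h₀ : SchwartzMap (EuclideanSpace ℝ (Fin n)) ℂ,
      ‖∫ y : EuclideanSpace ℝ (Fin n), ∫ x : EuclideanSpace ℝ (Fin n),
          ((‖y - x‖ ^ (α - n) * (1 + ‖x‖ ^ 2) ^ (-s / 2) * (1 + ‖y‖ ^ 2) ^ (-t / 2) : ℝ) : ℂ) *
            (g₀ x * (starRingEnd ℂ) (h₀ y))‖ ≤
        K * l2Norm n ⇑g₀ * l2Norm n ⇑h₀) :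
    ∃ K₁ > 0, ∀ m : ℕ, 1 ≤ m →
      (∫ p in (Metric.closedBall (0 : EuclideanSpace ℝ (Fin n)) (m : ℝ)) ×ˢ
            (Metric.closedBall (0 : EuclideanSpace ℝ (Fin n)) (m : ℝ)),
          (1 + ‖p.1‖ ^ 2 + ‖p.2‖ ^ 2) ^ (-((n : ℝ) - α + s + t) / 2)) ≤
        K₁ * (m : ℝ) ^ n := by
  have : NeZero n := ⟨by lia⟩
  have hform : IsL2BoundedForm (volume : Measure (EuclideanSpace ℝ (Fin n)))
      (weightedRieszKernel (α - finrank ℝ (EuclideanSpace ℝ (Fin n))) s t) := by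
    simpa only [IsL2BoundedForm, weightedRieszKernel, finrank_euclideanSpace_fin, l2Norm,
      Real.sqrt_eq_rpow] using hker
  obtain ⟨C, hC, hgrowth⟩ := kernel_bound_implies_growth_general volume hform
  rw [finrank_euclideanSpace_fin] at hgrowth
  exact ⟨C, hC, fun m hm => hgrowth m (by exact_mod_cast hm)⟩
end
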